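/- Let p be an odd prime, e ≥ 1, q = p^e, and 1 ≤ m, n ≤ q-1; let d = gcd(q-1, m, n), and let e_s be the positive divisor of e such that q_s = (q-1)/(p^{e_s}-1) is the largest among the numbers q_i = (q-1)/(p^{e_i}-1) (over positive divisors e_i of e) dividing d. Then the monomial digraph D(q;m,n) has exactly (p^{e-e_s}+1)/2 strong components; exactly one of them has order p^{e+e_s}, and each of the remaining (p^{e-e_s}-1)/2 strong components has order 2·p^{e+e_s}, and these remaining components are pairwise isomorphic. -/

import Mathlib

/-!
Let `A` be the additive subgroup of `F` generated by the values `x ^ m * y ^ n`. An arc from `z` to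
`w` forces `z.2 + w.2 ∈ A`, so along any walk the second coordinate only moves inside
`±z.2 + A`. Conversely, passing through vertices with first coordinate `0` (where the monomial
vanishes because `m, n ≥ 1`) every vertex of `F × (±z.2 + A)` is reached (`reach_iff`). Hence the
strong components are exactly the sets `F × (±b + A)`: one of order `q * |A|` (for `b ∈ A`), all
others of order `2 * q * |A|` since `2` is invertible. Counting the vertices of `F × F`
gives the number of components, and `±a + k ↦ ±b + k` on second coordinates is an isomorphism
between two components with `a, b ∉ A`, as the arc relation only sees pairs with opposite signs.

It remains to see `|A| = p ^ es` (`card_valueSubring`). The values form a multiplicative monoid, so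
`A` is a subring of a finite field, hence a field with `p ^ f` elements, `f ∣ e`. Applying
`a ^ (p ^ f) = a` to the powers of a generator of `Fˣ` gives `(q - 1) / (p ^ f - 1) ∣ d`, so
`es ≤ f` by maximality; and `(q - 1) / (p ^ es - 1) ∣ d` says that all values, hence all of `A`, are
fixed by `x ↦ x ^ (p ^ es)`, which has at most `p ^ es` fixed points, so `f ≤ es`.
-/

open Relation

namespace MonomialDigraph

section Field

variable {F : Type*} [Field F]

/-- The values `x ^ m * y ^ n` of the monomial, as a multiplicative submonoid of `F`. -/
def valueMonoid (F : Type*) [Field F] (m n : ℕ) : Submonoid F where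
  carrier := {a | ∃ x y : F, x ^ m * y ^ n = a}
  one_mem' := ⟨1, 1, by simp⟩
  mul_mem' := by
    rintro _ _ ⟨x, y, rfl⟩ ⟨u, v, rfl⟩
    exact ⟨x * u, y * v, by rw [mul_pow, mul_pow]; ring⟩

/-- The subring generated by the values of the monomial. As the values are closed under
multiplication, it is also the additive group they generate. -/
def valueSubring (F : Type*) [Field F] (m n : ℕ) : Subring F :=
  Subring.closure (valueMonoid F m n : Set F)

theorem value_mem (m n : ℕ) (x y : F) : x ^ m * y ^ n ∈ valueSubring F m n :=
  Subring.subset_closure ⟨x, y, rfl⟩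

theorem mem_valueSubring_iff (m n : ℕ) (a : F) :
    a ∈ valueSubring F m n ↔ a ∈ AddSubgroup.closure (valueMonoid F m n : Set F) := by
  rw [valueSubring, Subring.mem_closure_iff, Submonoid.closure_eq]

/-! ### Reachability -/

/-- The arc relation of the monomial digraph. -/
abbrev Arc (F : Type*) [Field F] (m n : ℕ) (z w : F × F) : Prop :=
  z.2 + w.2 = z.1 ^ m * w.1 ^ n

/-- The second coordinates of `z` and `w` agree modulo `A` up to sign. -/
def Rel (A : Subring F) (z w : F × F) : Prop :=
  w.2 - z.2 ∈ A ∨ w.2 + z.2 ∈ A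

theorem Rel.refl (A : Subring F) (z : F × F) : Rel A z z := by
  left; rw [sub_self]; exact A.zero_mem

theorem Rel.symm {A : Subring F} {z w : F × F} (h : Rel A z w) : Rel A w z := by
  rcases h with h | h
  · left; simpa using A.neg_mem h
  · right; rwa [add_comm]

theorem Rel.trans {A : Subring F} {z w v : F × F} (h : Rel A z w) (h' : Rel A w v) :
    Rel A z v := by
  rcases h with h | h <;> rcases h' with h' | h'
  · left; convert A.add_mem h h' using 1; ring
  · right; convert A.sub_mem h' h using 1; ring
  · right; convert A.add_mem h h' using 1; ring
  · left; convert A.sub_mem h' h using 1; ring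

/-- A vertex in the zero column reaches every translate, by an element of the value ring, of itself
inside that column. -/
theorem reach_zero_column {m n : ℕ} (hm : 1 ≤ m) (hn : 1 ≤ n) {k : F}
    (hk : k ∈ valueSubring F m n) :
    ∀ b : F, ReflTransGen (Arc F m n) (0, b) (0, b - k) := by
  have hm0 : m ≠ 0 := by omega
  have hn0 : n ≠ 0 := by omega
  have hneg : ∀ b : F, ReflTransGen (Arc F m n) (0, b) (0, -b) := fun b =>
    ReflTransGen.single (by simp [Arc, hm0])
  rw [mem_valueSubring_iff] at hk
  induction hk using AddSubgroup.closure_induction with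
  | mem k hk =>
    obtain ⟨x, y, rfl⟩ := hk
    intro b
    refine (hneg b).trans ?_
    -- The walk `(0, -b) → (x, b) → (y, x ^ m * y ^ n - b) → (0, b - x ^ m * y ^ n)`.
    refine ReflTransGen.head (b := (x, b)) (by simp [Arc, hm0]) ?_
    refine ReflTransGen.head (b := (y, x ^ m * y ^ n - b)) (by simp [Arc]) ?_
    exact ReflTransGen.single (by simp [Arc, hn0])
  | zero => intro b; rw [sub_zero]
  | add k l _ _ hk hl =>
    intro b
    have := (hk b).trans (hl _)
    rwa [sub_sub] at this
  | neg k _ hk =>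
    intro b
    have := ((hneg b).trans (hk _)).trans (hneg _)
    convert this using 2; ring

/-- Every vertex has arcs to and from the zero column, so reachability reduces to that column. -/
theorem reach_iff {m n : ℕ} (hm : 1 ≤ m) (hn : 1 ≤ n) (z w : F × F) :
    ReflTransGen (Arc F m n) z w ↔ Rel (valueSubring F m n) z w := by
  have hm0 : m ≠ 0 := by omega
  have hn0 : n ≠ 0 := by omega
  constructor
  · intro h
    induction h with
    | refl => exact Rel.refl _ _
    | @tail u v _ huv ih =>
      refine ih.trans (Or.inr ?_)
      have huv' : u.2 + v.2 = u.1 ^ m * v.1 ^ n := huv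
      rw [add_comm, huv']
      exact value_mem m n _ _
  · have hneg : ∀ b : F, ReflTransGen (Arc F m n) (0, b) (0, -b) := fun b =>
      ReflTransGen.single (by simp [Arc, hm0])
    obtain ⟨x, b⟩ := z
    obtain ⟨y, c⟩ := w
    intro h
    have h1 : ReflTransGen (Arc F m n) (x, b) (0, -b) :=
      ReflTransGen.single (by simp [Arc, hn0])
    have h2 : ReflTransGen (Arc F m n) (0, -c) (y, c) :=
      ReflTransGen.single (by simp [Arc, hm0])
    refine h1.trans (ReflTransGen.trans ?_ h2)
    rcases h with h | h
    · have := reach_zero_column hm hn h (-b)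
      convert this using 2
      simp only; ring
    · have := (hneg (-b)).trans (reach_zero_column hm hn h (- -b))
      convert this using 2
      simp

/-! ### Orders and number of the classes -/

/-- The `Rel A`-class of `z`, which is `F × (±z.2 + A)`. -/
def cls (A : Subring F) (z : F × F) : Set (F × F) := {w | Rel A z w}

theorem cls_eq_iff (A : Subring F) (z w : F × F) : cls A z = cls A w ↔ z ∈ cls A w := by
  constructor
  · intro h; rw [← h]; exact Rel.refl A z
  · intro h
    ext v
    exact ⟨fun hv => Rel.trans h hv, fun hv => Rel.trans (Rel.symm h) hv⟩

theorem half_mem [Finite F] (h2 : (2 : F) ≠ 0) (A : Subring F) {b : F} (hb : b + b ∈ A) :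
    b ∈ A := by
  have h2A : (2 : F) ∈ A := by simp
  -- In a finite field the inverse of `2` is a power of `2`.
  have hinv : (2 : F)⁻¹ ∈ A := by
    cases nonempty_fintype F
    have h := FiniteField.pow_card_sub_one_eq_one (2 : F) h2
    have hc : Fintype.card F - 1 = (Fintype.card F - 2) + 1 := by
      have := Fintype.one_lt_card (α := F); omega
    rw [hc, pow_succ] at h
    rw [← eq_inv_of_mul_eq_one_left h]
    exact A.pow_mem h2A _
  have := A.mul_mem hinv hb
  rwa [← two_mul, inv_mul_cancel_left₀ h2] at this

theorem ncard_translate (A : Subring F) (b : F) :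
    {c : F | c - b ∈ A}.ncard = Nat.card A := by
  have : {c : F | c - b ∈ A} = (fun a => a + b) '' (A : Set F) := by
    ext c
    constructor
    · intro h; exact ⟨c - b, h, by simp⟩
    · rintro ⟨a, ha, rfl⟩; simpa using ha
  rw [this, Set.ncard_image_of_injective _ (add_left_injective b)]
  rfl

theorem cls_eq_prod (A : Subring F) (z : F × F) :
    cls A z = Set.univ ×ˢ ({c : F | c - z.2 ∈ A} ∪ {c : F | c - -z.2 ∈ A}) := by
  ext w; simp [cls, Rel]

theorem ncard_cls_of_mem (A : Subring F) {z : F × F} (hz : z.2 ∈ A) :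
    (cls A z).ncard = Nat.card F * Nat.card A := by
  have h : {c : F | c - -z.2 ∈ A} = {c : F | c - z.2 ∈ A} := by
    ext c
    have h1 : c - -z.2 = (c - z.2) + (z.2 + z.2) := by ring
    have h2 : z.2 + z.2 ∈ A := A.add_mem hz hz
    simp only [Set.mem_ofPred_eq, h1]
    exact A.toAddSubgroup.add_mem_cancel_right h2
  rw [cls_eq_prod, h, Set.union_self, Set.ncard_prod, Set.ncard_univ, ncard_translate]

theorem ncard_cls_of_notMem [Finite F] (h2 : (2 : F) ≠ 0) (A : Subring F) {z : F × F}
    (hz : z.2 ∉ A) :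
    (cls A z).ncard = 2 * (Nat.card F * Nat.card A) := by
  rw [cls_eq_prod, Set.ncard_prod, Set.ncard_univ, Set.ncard_union_eq, ncard_translate,
    ncard_translate]
  · ring
  · rw [Set.disjoint_left]
    intro c h h'
    refine hz (half_mem h2 A ?_)
    convert A.sub_mem h' h using 1
    ring

/-- Two components other than `F × A` are isomorphic: the second coordinate `±a + k` is
moved to `±b + k`. -/
theorem exists_iso [Finite F] (h2 : (2 : F) ≠ 0) {m n : ℕ} {z w : F × F}
    (hz : z.2 ∉ valueSubring F m n) (hw : w.2 ∉ valueSubring F m n) :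
    ∃ ψ : cls (valueSubring F m n) z ≃ cls (valueSubring F m n) w, ∀ u v : cls (valueSubring F m n) z,
      Arc F m n (u : F × F) (v : F × F) ↔ Arc F m n (ψ u : F × F) (ψ v : F × F) := by
  classical
  set A := valueSubring F m n with hA
  obtain ⟨z1, a⟩ := z
  obtain ⟨w1, b⟩ := w
  simp only at hz hw
  -- The two sign classes of a component are disjoint.
  have key : ∀ a : F, a ∉ A → ∀ c : F, c + a ∈ A → c - a ∉ A := by
    intro a ha c h h'
    refine ha (half_mem h2 A ?_)
    convert A.sub_mem h h' using 1
    ring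
  let f : F → F → F × F → F × F := fun a b u =>
    if u.2 - a ∈ A then (u.1, u.2 - a + b) else (u.1, u.2 + a - b)
  have hf : ∀ (a b x : F) (u : F × F), u ∈ cls A (x, a) → ∀ y, f a b u ∈ cls A (y, b) := by
    intro a b x u hu y
    by_cases h : u.2 - a ∈ A
    · left; simp [f, h]
    · right
      have : u.2 + a ∈ A := hu.resolve_left h
      simpa [f, h] using this
  have hff : ∀ (a b x : F) (u : F × F), b ∉ A → u ∈ cls A (x, a) → f b a (f a b u) = u := by
    intro a b x u hb hu
    by_cases h : u.2 - a ∈ A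
    · simp [f, h]
    · have h1 : u.2 + a ∈ A := hu.resolve_left h
      have h3 : u.2 + a - b - b ∉ A := key b hb _ (by simpa using h1)
      simp [f, h, h3]
  refine ⟨⟨fun u => ⟨f a b u, hf a b z1 u u.2 w1⟩, fun u => ⟨f b a u, hf b a w1 u u.2 z1⟩,
    fun u => Subtype.ext (hff a b z1 u hw u.2), fun u => Subtype.ext (hff b a w1 u hz u.2)⟩, ?_⟩
  have hno : ∀ u v : F × F, u.2 + v.2 ∉ A → ¬ Arc F m n u v := by
    intro u v h h'
    refine h ?_
    have h'' : u.2 + v.2 = u.1 ^ m * v.1 ^ n := h'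
    rw [h'']
    exact value_mem m n _ _
  rintro ⟨⟨x, s⟩, hu⟩ ⟨⟨y, t⟩, hv⟩
  change Arc F m n (x, s) (y, t) ↔ Arc F m n (f a b (x, s)) (f a b (y, t))
  by_cases hs : s - a ∈ A <;> by_cases ht : t - a ∈ A
  · -- Equal signs: neither sum lies in `A`, so there is no arc on either side.
    refine iff_of_false (hno _ _ fun h => hz (half_mem h2 A ?_))
      (hno _ _ fun h => hw (half_mem h2 A ?_))
    · convert A.sub_mem (A.sub_mem h hs) ht using 1; ring
    · simp only [f, hs, ht, if_true] at h
      convert A.sub_mem (A.sub_mem h hs) ht using 1; ring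
  · have : s - a + b + (t + a - b) = s + t := by ring
    simp only [Arc, f, hs, ht, if_true, if_false, this]
  · have : s + a - b + (t - a + b) = s + t := by ring
    simp only [Arc, f, hs, ht, if_true, if_false, this]
  · have hs' : s + a ∈ A := hu.resolve_left hs
    have ht' : t + a ∈ A := hv.resolve_left ht
    refine iff_of_false (hno _ _ fun h => hz (half_mem h2 A ?_))
      (hno _ _ fun h => hw (half_mem h2 A ?_))
    · convert A.sub_mem (A.add_mem hs' ht') h using 1; ring
    · simp only [f, hs, ht, if_false] at h
      convert A.sub_mem (A.add_mem hs' ht') h using 1; ring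

/-- The number of classes other than `F × A`, obtained by counting `F × F` class by class. -/
theorem card_classes [Finite F] (h2 : (2 : F) ≠ 0) (A : Subring F) :
    Nat.card F = Nat.card A * (1 + 2 * {S | ∃ z : F × F, z.2 ∉ A ∧ S = cls A z}.ncard) := by
  classical
  cases nonempty_fintype F
  set N : Set (Set (F × F)) := {S | ∃ z : F × F, z.2 ∉ A ∧ S = cls A z} with hN
  have hfin : N.Finite := Set.toFinite _
  have hmem : ∀ x y : F × F, x.2 ∈ A → cls A x = cls A y → y.2 ∈ A := by
    intro x y hx h
    have : Rel A y x := (cls_eq_iff A x y).1 h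
    rcases this with h | h
    · simpa using A.sub_mem hx h
    · simpa using A.sub_mem h hx
  have hnot : cls A (0, 0) ∉ hfin.toFinset := by
    rw [Set.Finite.mem_toFinset]
    rintro ⟨z, hz, h⟩
    exact hz (hmem _ _ A.zero_mem h)
  have hmaps : ∀ z ∈ (Finset.univ : Finset (F × F)),
      cls A z ∈ insert (cls A (0, 0)) hfin.toFinset := by
    intro z _
    by_cases hz : z.2 ∈ A
    · refine Finset.mem_insert.2 (Or.inl ?_)
      rw [cls_eq_iff]
      left; simpa using hz
    · exact Finset.mem_insert.2 (Or.inr (hfin.mem_toFinset.2 ⟨z, hz, rfl⟩))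
  have hfib : ∀ w : F × F,
      (Finset.univ.filter fun z : F × F => cls A z = cls A w).card = (cls A w).ncard := by
    intro w
    rw [← Set.ncard_coe_finset]
    congr 1
    ext z
    simp [cls_eq_iff]
  have hsum := Finset.card_eq_sum_card_fiberwise hmaps
  rw [Finset.sum_insert hnot, hfib, ncard_cls_of_mem A (z := (0, 0)) A.zero_mem,
    Finset.sum_congr rfl (g := fun _ => 2 * (Nat.card F * Nat.card A)), Finset.sum_const,
    ← Set.ncard_eq_toFinset_card N hfin, Finset.card_univ, Fintype.card_prod,
    ← Nat.card_eq_fintype_card] at hsum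
  · have hpos : 0 < Nat.card F := Nat.card_pos
    apply Nat.eq_of_mul_eq_mul_left hpos
    rw [hsum, smul_eq_mul]
    ring
  · intro S hS
    obtain ⟨z, hz, rfl⟩ := hfin.mem_toFinset.1 hS
    rw [hfib, ncard_cls_of_notMem h2 A hz]

end Field

/-! ### Order of the value ring -/

theorem pow_sub_one_dvd (p : ℕ) {a b : ℕ} (h : a ∣ b) : p ^ a - 1 ∣ p ^ b - 1 := by
  obtain ⟨c, rfl⟩ := h
  rw [pow_mul]
  simpa using Nat.sub_dvd_pow_sub_pow (p ^ a) 1 c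

/-- The value ring has `p ^ es` elements, for the `es` that maximises `(p ^ e - 1) / (p ^ es - 1)`
among the divisors of `gcd (p ^ e - 1, m, n)` of this form. -/
theorem card_valueSubring {p e : ℕ} (hp : p.Prime) (he : 1 ≤ e)
    {F : Type*} [Field F] [Fintype F] (hF : Fintype.card F = p ^ e)
    {m n : ℕ} (hm1 : 1 ≤ m) (hn1 : 1 ≤ n) {es : ℕ} (hes1 : 1 ≤ es) (hesdvd : es ∣ e)
    (hqs : (p ^ e - 1) / (p ^ es - 1) ∣ Nat.gcd (p ^ e - 1) (Nat.gcd m n))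
    (hmax : ∀ ei : ℕ, 1 ≤ ei → ei ∣ e →
      (p ^ e - 1) / (p ^ ei - 1) ∣ Nat.gcd (p ^ e - 1) (Nat.gcd m n) →
      (p ^ e - 1) / (p ^ ei - 1) ≤ (p ^ e - 1) / (p ^ es - 1)) :
    Nat.card (valueSubring F m n) = p ^ es := by
  classical
  have hgt : ∀ i, 1 ≤ i → 1 < p ^ i := fun i hi => Nat.one_lt_pow (by omega) hp.one_lt
  -- `A` is a finite field over which `F` is a vector space, so `|A| = p ^ f` with `f ∣ e`.
  obtain ⟨f, hf1, hfe, hcard⟩ : ∃ f, 1 ≤ f ∧ f ∣ e ∧ Nat.card (valueSubring F m n) = p ^ f := by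
    let A := valueSubring F m n
    let : Field A := (Finite.isField_of_domain A).toField
    have hpow := Module.natCard_eq_pow_finrank (K := A) (V := F)
    rw [Nat.card_eq_fintype_card (α := F), hF] at hpow
    have hr : Module.finrank A F ≠ 0 := by
      intro h0
      rw [h0, pow_zero] at hpow
      exact (hgt e he).ne' hpow
    have hdvd : Nat.card A ∣ p ^ e := by
      rw [hpow]; exact dvd_pow_self _ hr
    obtain ⟨f, -, hf⟩ := (Nat.dvd_prime_pow hp).1 hdvd
    rw [hf, ← pow_mul] at hpow
    refine ⟨f, ?_, ⟨_, Nat.pow_right_injective hp.two_le hpow⟩, hf⟩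
    by_contra h0
    have hf0 : f = 0 := by omega
    rw [hf0, pow_zero] at hf
    exact Finite.one_lt_card (α := A).ne' hf
  have hfix : ∀ a ∈ valueSubring F m n, a ^ (p ^ f) = a := by
    intro a ha
    let : Field (valueSubring F m n) := (Finite.isField_of_domain _).toField
    have h := FiniteField.pow_card (⟨a, ha⟩ : valueSubring F m n)
    rw [← Nat.card_eq_fintype_card, hcard] at h
    exact congrArg Subtype.val h
  -- A subring all of whose elements are roots of `X ^ (p ^ es) - X` has at most `p ^ es` elements.
  have hle : p ^ f ≤ p ^ es := by
    have hFm : CharP F p := by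
      have : Fact p.Prime := ⟨hp⟩
      exact charP_of_card_eq_prime_pow hF
    have : Fact p.Prime := ⟨hp⟩
    have hval : ∀ x : F, ∀ k, 1 ≤ k → (p ^ e - 1) / (p ^ es - 1) ∣ k →
        (x ^ k) ^ (p ^ es) = x ^ k := by
      intro x k hk ⟨c, hc⟩
      rcases eq_or_ne x 0 with rfl | hx
      · rw [zero_pow (by omega), zero_pow (by have := hgt es hes1; omega)]
      · have h1 : (x ^ k) ^ (p ^ es - 1) = 1 := by
          rw [hc, ← pow_mul, mul_right_comm, Nat.div_mul_cancel (pow_sub_one_dvd p hesdvd),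
            pow_mul, ← hF, FiniteField.pow_card_sub_one_eq_one x hx, one_pow]
        rw [← Nat.sub_add_cancel (hgt es hes1).le, pow_succ, h1, one_mul]
    have hA : valueSubring F m n ≤ (iterateFrobenius F p es).eqLocus (RingHom.id F) := by
      refine Subring.closure_le.2 ?_
      rintro _ ⟨x, y, rfl⟩
      change iterateFrobenius F p es (x ^ m * y ^ n) = x ^ m * y ^ n
      rw [iterateFrobenius_def, mul_pow,
        hval x m hm1 (hqs.trans ((Nat.gcd_dvd_right _ _).trans (Nat.gcd_dvd_left _ _))),
        hval y n hn1 (hqs.trans ((Nat.gcd_dvd_right _ _).trans (Nat.gcd_dvd_right _ _)))]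
    let P : Polynomial F := Polynomial.X ^ (p ^ es) - Polynomial.X
    have hP0 : P ≠ 0 := FiniteField.X_pow_card_sub_X_ne_zero F (hgt es hes1)
    have hPdeg : P.natDegree = p ^ es :=
      FiniteField.X_pow_card_sub_X_natDegree_eq F (hgt es hes1)
    have hsub : (valueSubring F m n : Set F) ⊆ (P.roots.toFinset : Set F) := by
      intro a ha
      have h : a ^ (p ^ es) = a := by
        have := hA ha
        rwa [RingHom.mem_eqLocus, iterateFrobenius_def] at this
      simp [hP0, Polynomial.IsRoot, P, h]
    calc p ^ f = (valueSubring F m n : Set F).ncard := hcard.symm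
      _ ≤ (P.roots.toFinset : Set F).ncard := Set.ncard_le_ncard hsub (Set.toFinite _)
      _ = P.roots.toFinset.card := Set.ncard_coe_finset _
      _ ≤ P.roots.card := Multiset.toFinset_card_le _
      _ ≤ p ^ es := hPdeg ▸ P.card_roots'
  have hge : p ^ es ≤ p ^ f := by
    have hPf : 0 < p ^ f - 1 := Nat.sub_pos_of_lt (hgt f hf1)
    have hQf := Nat.div_mul_cancel (pow_sub_one_dvd p hfe)
    have hQs := Nat.div_mul_cancel (pow_sub_one_dvd p hesdvd)
    -- Evaluating `a ^ (p ^ f) = a` at powers of a generator of `Fˣ` gives divisibility by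
    -- `(p ^ e - 1) / (p ^ f - 1)`.
    obtain ⟨g, hg⟩ := IsCyclic.exists_generator (α := Fˣ)
    have hord : orderOf g = p ^ e - 1 := by
      rw [orderOf_eq_card_of_forall_mem_zpowers hg, Nat.card_eq_fintype_card,
        Fintype.card_units, hF]
    have hdiv : ∀ k, (g : F) ^ k ∈ valueSubring F m n → (p ^ e - 1) / (p ^ f - 1) ∣ k := by
      intro k hk
      have h1 := hfix _ hk
      rw [← Nat.sub_add_cancel (hgt f hf1).le, pow_succ] at h1
      have h2 : ((g : F) ^ k) ^ (p ^ f - 1) = 1 :=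
        mul_right_cancel₀ (pow_ne_zero k g.ne_zero) (h1.trans (one_mul _).symm)
      have h3 : g ^ (k * (p ^ f - 1)) = 1 := by
        ext
        rw [pow_mul]
        push_cast
        exact h2
      have h4 := orderOf_dvd_of_pow_eq_one h3
      rw [hord, ← hQf] at h4
      exact Nat.dvd_of_mul_dvd_mul_right hPf h4
    have hdm := hdiv m (by simpa using value_mem m n (g : F) 1)
    have hdn := hdiv n (by simpa using value_mem m n 1 (g : F))
    have hk := hmax f hf1 hfe
      (Nat.dvd_gcd (Nat.div_dvd_of_dvd (pow_sub_one_dvd p hfe)) (Nat.dvd_gcd hdm hdn))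
    have hpos : 0 < (p ^ e - 1) / (p ^ es - 1) := by
      rcases Nat.eq_zero_or_pos ((p ^ e - 1) / (p ^ es - 1)) with h0 | h0
      · rw [h0, zero_mul] at hQs
        have := hgt e he
        omega
      · exact h0
    by_contra hlt
    have hlt' : p ^ f - 1 < p ^ es - 1 := by omega
    have := Nat.mul_lt_mul_of_le_of_lt hk hlt' hpos
    omega
  rw [hcard]
  exact le_antisymm hle hge

end MonomialDigraph

/-- For odd `q = p^e`, the monomial digraph `D(q;m,n)` has exactly
`(p^{e-e_s}+1)/2` strong components; exactly one has order `p^{e+e_s}`, each of the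
remaining `(p^{e-e_s}-1)/2` has order `2·p^{e+e_s}`, and the remaining components are
pairwise isomorphic. -/
theorem stmt_18 {p e : ℕ} (hp : p.Prime) (hodd : Odd p) (he : 1 ≤ e)
    {F : Type*} [Field F] [Fintype F]
    (hF : Fintype.card F = p ^ e)
    (m n : ℕ) (hm1 : 1 ≤ m) (hm2 : m ≤ p ^ e - 1) (hn1 : 1 ≤ n) (hn2 : n ≤ p ^ e - 1)
    (d : ℕ) (hd : d = Nat.gcd (p ^ e - 1) (Nat.gcd m n))
    (es : ℕ) (hes1 : 1 ≤ es) (hesdvd : es ∣ e)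
    (hqs : (p ^ e - 1) / (p ^ es - 1) ∣ d)
    (hmax : ∀ ei : ℕ, 1 ≤ ei → ei ∣ e → (p ^ e - 1) / (p ^ ei - 1) ∣ d →
      (p ^ e - 1) / (p ^ ei - 1) ≤ (p ^ e - 1) / (p ^ es - 1))
    (comps : Set (Set (F × F)))
    (hcomps : comps = {S | ∃ z : F × F,
      S = {w | ReflTransGen (fun z w : F × F => z.2 + w.2 = z.1 ^ m * w.1 ^ n) z w ∧
               ReflTransGen (fun z w : F × F => z.2 + w.2 = z.1 ^ m * w.1 ^ n) w z}}) :
    comps.ncard = (p ^ (e - es) + 1) / 2 ∧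
    {S ∈ comps | S.ncard = p ^ (e + es)}.ncard = 1 ∧
    {S ∈ comps | S.ncard = 2 * p ^ (e + es)}.ncard = (p ^ (e - es) - 1) / 2 ∧
    (∀ S ∈ comps, S.ncard = p ^ (e + es) ∨ S.ncard = 2 * p ^ (e + es)) ∧
    ∀ S ∈ comps, ∀ T ∈ comps,
      S.ncard = 2 * p ^ (e + es) → T.ncard = 2 * p ^ (e + es) →
      ∃ ψ : S ≃ T, ∀ z w : S,
        ((z : F × F).2 + (w : F × F).2 = (z : F × F).1 ^ m * (w : F × F).1 ^ n) ↔
        ((ψ z : F × F).2 + (ψ w : F × F).2 = (ψ z : F × F).1 ^ m * (ψ w : F × F).1 ^ n) := by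
  open MonomialDigraph in
  classical
  subst hd
  set A := valueSubring F m n with hA
  have hAcard : Nat.card A = p ^ es :=
    card_valueSubring hp he hF hm1 hn1 hes1 hesdvd hqs hmax
  have hFcard : Nat.card F = p ^ e := by rw [Nat.card_eq_fintype_card, hF]
  have h2 : (2 : F) ≠ 0 := by
    have : Fact p.Prime := ⟨hp⟩
    have : CharP F p := charP_of_card_eq_prime_pow hF
    have hp2 : p ≠ 2 := by rintro rfl; exact absurd hodd (by decide)
    exact Ring.two_ne_zero (by rwa [ringChar.eq F p])
  have hcomps' : comps = {S | ∃ z : F × F, S = cls A z} := by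
    rw [hcomps]
    ext S
    refine exists_congr fun z => ?_
    have : {w | ReflTransGen (fun z w : F × F => z.2 + w.2 = z.1 ^ m * w.1 ^ n) z w ∧
        ReflTransGen (fun z w : F × F => z.2 + w.2 = z.1 ^ m * w.1 ^ n) w z} = cls A z := by
      ext w
      exact ⟨fun h => (reach_iff hm1 hn1 z w).1 h.1,
        fun h => ⟨(reach_iff hm1 hn1 z w).2 h, (reach_iff hm1 hn1 w z).2 (Rel.symm h)⟩⟩
    rw [← this]
  have hin : ∀ z : F × F, z.2 ∈ A → (cls A z).ncard = p ^ (e + es) := fun z hz => by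
    rw [ncard_cls_of_mem A hz, hFcard, hAcard, pow_add]
  have hout : ∀ z : F × F, z.2 ∉ A → (cls A z).ncard = 2 * p ^ (e + es) := fun z hz => by
    rw [ncard_cls_of_notMem h2 A hz, hFcard, hAcard, pow_add]
  have hpos : 0 < p ^ (e + es) := pow_pos hp.pos _
  have hsmall : {S ∈ comps | S.ncard = p ^ (e + es)} = {cls A (0, 0)} := by
    ext S
    constructor
    · rintro ⟨hS, hc⟩
      rw [hcomps'] at hS
      obtain ⟨z, rfl⟩ := hS
      have hz : z.2 ∈ A := by
        by_contra hz
        have := hout z hz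
        omega
      refine (cls_eq_iff A z _).2 (Or.inl ?_)
      simpa using hz
    · rintro rfl
      exact ⟨by rw [hcomps']; exact ⟨_, rfl⟩, hin _ A.zero_mem⟩
  have hlarge : {S ∈ comps | S.ncard = 2 * p ^ (e + es)} =
      {S | ∃ z : F × F, z.2 ∉ A ∧ S = cls A z} := by
    ext S
    constructor
    · rintro ⟨hS, hc⟩
      rw [hcomps'] at hS
      obtain ⟨z, rfl⟩ := hS
      refine ⟨z, fun hz => ?_, rfl⟩
      have := hin z hz
      omega
    · rintro ⟨z, hz, rfl⟩
      exact ⟨by rw [hcomps']; exact ⟨z, rfl⟩, hout z hz⟩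
  have hdich : ∀ S ∈ comps, S.ncard = p ^ (e + es) ∨ S.ncard = 2 * p ^ (e + es) := by
    intro S hS
    rw [hcomps'] at hS
    obtain ⟨z, rfl⟩ := hS
    by_cases hz : z.2 ∈ A
    · exact Or.inl (hin z hz)
    · exact Or.inr (hout z hz)
  have hcount : p ^ (e - es) = 1 + 2 * {S ∈ comps | S.ncard = 2 * p ^ (e + es)}.ncard := by
    have h := card_classes h2 A
    rw [hFcard, hAcard, ← hlarge] at h
    have hle : es ≤ e := Nat.le_of_dvd he hesdvd
    refine Nat.eq_of_mul_eq_mul_left (pow_pos hp.pos es) ?_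
    rw [← h, ← pow_add, Nat.add_sub_cancel' hle]
  have hone : {S ∈ comps | S.ncard = p ^ (e + es)}.ncard = 1 := by
    rw [hsmall, Set.ncard_singleton]
  have htotal : comps.ncard = {S ∈ comps | S.ncard = p ^ (e + es)}.ncard +
      {S ∈ comps | S.ncard = 2 * p ^ (e + es)}.ncard := by
    rw [← Set.ncard_union_eq _ (Set.toFinite _) (Set.toFinite _)]
    · congr 1
      ext S
      constructor
      · intro hS
        exact (hdich S hS).imp (fun h => ⟨hS, h⟩) (fun h => ⟨hS, h⟩)
      · rintro (h | h) <;> exact h.1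
    · rw [Set.disjoint_left]
      rintro S ⟨-, h⟩ ⟨-, h'⟩
      omega
  refine ⟨by omega, hone, by omega, hdich, ?_⟩
  intro S hS T hT hSc hTc
  have hS' : S ∈ {S ∈ comps | S.ncard = 2 * p ^ (e + es)} := ⟨hS, hSc⟩
  have hT' : T ∈ {S ∈ comps | S.ncard = 2 * p ^ (e + es)} := ⟨hT, hTc⟩
  rw [hlarge] at hS' hT'
  obtain ⟨z, hz, rfl⟩ := hS'
  obtain ⟨w, hw, rfl⟩ := hT'
  exact exists_iso h2 hz hw
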